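/- Let p be an odd prime for which 2 is a semiprimitive root modulo p, i.e., 2 has multiplicative order (p−1)/2 modulo p and the congruence 2^x ≡ −1 (mod p) has no solution. Let a ∈ {0,1,…,p−1} and j ∈ {0,1}. Then for every ε > 0 one has T^{(j)}_{p,a}(x) − x/(2p) = Ω(x^{α−ε}); that is, there exist a constant c > 0 and arbitrarily large x with |T^{(j)}_{p,a}(x) − x/(2p)| ≥ c·x^{α−ε}, where α = ln p / ((p−1)·ln 2). (Lower-bound half of Theorem 3.) -/

import Mathlib

/-!
Let `S(x)` be the sum of `(-1) ^ s n` over `n < x`, `n ≡ a (mod p)`. As `x / p + O(1)` of these `n`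
exist, `T p a j x - x / (2 * p) = ± S(x) / 2 + O(1)`, so it suffices to make `S` large.

Write `e(l) = exp (2πil / p)` and `r = (p - 1) / 2`. The generating polynomial
`∑_{n < 2 ^ k} (-1) ^ s n z ^ n` factors as `∏_{i < k} (1 - z ^ 2 ^ i)`, and the nonzero residues
modulo `p` are the `± 2 ^ i` with `i < r`. Fourier inversion therefore gives
`p * S(2 ^ (r * k)) = 2 * Re (A * P ^ k)` for `k ≠ 0`, where `A = ∑_{i < r} e(-a * 2 ^ i)` and
`P = ∏_{i < r} (1 - e(2 ^ i))`. Here `|P| ^ 2 = ∏_{l ≠ 0} (1 - e(l)) = p`, while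
`2 * Re A = ∑_{l ≠ 0} e(-a * l)` is `-1` or `p - 1`, hence nonzero. Consequently
`|Re (A * P ^ k)|` is at least a constant times `√p ^ k` for infinitely many `k`, and
`√p ^ k = x ^ α` for `x = 2 ^ (r * k)`.
-/

/-- `s n` is the number of 1's in the binary expansion of `n`. -/
def s (n : ℕ) : ℕ := (Nat.digits 2 n).sum

/-- `T m a j x` counts natural numbers `n < x` with `n ≡ a (mod m)` and `s n ≡ j (mod 2)`. -/
def T (m a j x : ℕ) : ℕ :=
  ((Finset.range x).filter (fun n => n % m = a ∧ s n % 2 = j)).card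

open Finset Filter
open scoped ComplexConjugate

@[to_additive]
lemma prod_range_eq_prod_blocks {M : Type*} [CommMonoid M] (f : ℕ → M) (m n : ℕ) :
    ∏ k ∈ range (m * n), f k = ∏ i ∈ range n, ∏ j ∈ range m, f (m * i + j) := by
  induction n with
  | zero => simp
  | succ n ih => rw [Nat.mul_succ, prod_range_add, ih, prod_range_succ]

lemma s_two_mul (n : ℕ) : s (2 * n) = s n := by
  rcases n.eq_zero_or_pos with rfl | hn
  · rfl
  · simp [s, Nat.digits_base_mul one_lt_two hn]

lemma s_two_mul_add_one (n : ℕ) : s (2 * n + 1) = s n + 1 := by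
  rw [s, add_comm, Nat.digits_add 2 one_lt_two 1 n one_lt_two (.inl one_ne_zero), List.sum_cons,
    add_comm, s]

lemma sum_range_two_pow_neg_one_pow_s_mul_pow {R : Type*} [CommRing R] (k : ℕ) (z : R) :
    ∑ n ∈ range (2 ^ k), (-1) ^ s n * z ^ n = ∏ i ∈ range k, (1 - z ^ 2 ^ i) := by
  induction k generalizing z with
  | zero => simp [s]
  | succ k ih =>
    have hsq (i : ℕ) : z ^ 2 ^ (i + 1) = (z ^ 2) ^ 2 ^ i := by rw [← pow_mul, pow_succ']
    simp only [pow_succ' 2 k, sum_range_eq_sum_blocks, prod_range_succ', hsq, ← ih (z ^ 2),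
      sum_mul]
    refine sum_congr rfl fun n _ => ?_
    simp only [sum_range_succ, sum_range_zero, add_zero, s_two_mul, s_two_mul_add_one]
    ring

/-- The sum of the Thue–Morse signs `(-1) ^ s n` over the `n < x` in the residue class `a`
modulo `m`. -/
def signedCount (m : ℕ) (a : ZMod m) (x : ℕ) : ℤ :=
  ∑ n ∈ range x with ((n : ℕ) : ZMod m) = a, (-1) ^ s n

lemma natCast_zmod_eq_iff_mod_eq {m a : ℕ} (ha : a < m) (n : ℕ) :
    (n : ZMod m) = a ↔ n % m = a := by
  rw [ZMod.natCast_eq_natCast_iff', Nat.mod_eq_of_lt ha]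

lemma two_mul_T {m a j : ℕ} (ha : a < m) (hj : j < 2) (x : ℕ) :
    2 * (T m a j x : ℤ) = #{n ∈ range x | n % m = a} + (-1) ^ j * signedCount m a x := by
  have hparity (t : ℕ) : 2 * (if t % 2 = j then 1 else 0 : ℤ) = 1 + (-1) ^ j * (-1) ^ t := by
    rcases Nat.mod_two_eq_zero_or_one t with ht | ht <;>
      rw [neg_one_pow_eq_pow_mod_two t, ht] <;> interval_cases j <;> rfl
  simp only [T, signedCount, natCast_zmod_eq_iff_mod_eq ha, ← filter_filter,
    card_filter _ (filter _ _), Nat.cast_sum, Nat.cast_ite, Nat.cast_one, Nat.cast_zero, mul_sum,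
    hparity, sum_add_distrib, sum_const, nsmul_one]

lemma abs_card_filter_mod_sub_div_le {m a : ℕ} (ha : a < m) (x : ℕ) :
    |(#{n ∈ range x | n % m = a} : ℝ) - x / m| ≤ 1 := by
  have hm : 0 < m := by omega
  have hceil := Nat.count_modEq_card_eq_ceil x hm a
  simp only [Nat.count_eq_card_filter_range, Nat.ModEq, Nat.mod_eq_of_lt ha] at hceil
  obtain ⟨hlt, hle⟩ := Int.ceil_eq_iff.1 hceil.symm
  have hlt' : (#{n ∈ range x | n % m = a} : ℝ) - 1 < (x - a) / m := by exact_mod_cast hlt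
  have hle' : ((x : ℝ) - a) / m ≤ #{n ∈ range x | n % m = a} := by exact_mod_cast hle
  have ham : (a : ℝ) / m ≤ 1 := div_le_one_of_le₀ (by exact_mod_cast ha.le) m.cast_nonneg
  have ham' : (0 : ℝ) ≤ a / m := by positivity
  rw [sub_div] at hlt' hle'
  exact abs_le.2 ⟨by linarith, by linarith⟩

lemma abs_signedCount_sub_one_le {m a j : ℕ} (ha : a < m) (hj : j < 2) (x : ℕ) :
    |(signedCount m a x : ℝ)| - 1 ≤ 2 * |(T m a j x : ℝ) - x / (2 * m)| := by
  have hT : 2 * (T m a j x : ℝ) =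
      #{n ∈ range x | n % m = a} + (-1) ^ j * signedCount m a x := by
    exact_mod_cast two_mul_T ha hj x
  set N := (#{n ∈ range x | n % m = a} : ℝ)
  have hsigned : (-1 : ℝ) ^ j * (signedCount m a x : ℝ) =
      2 * ((T m a j x : ℝ) - x / (2 * m)) - (N - x / m) := by
    rw [mul_sub, hT]; ring
  calc |(signedCount m a x : ℝ)| - 1 = |(-1) ^ j * (signedCount m a x : ℝ)| - 1 := by
        simp [abs_mul]
    _ ≤ |2 * ((T m a j x : ℝ) - x / (2 * m))| + |N - x / m| - 1 := by
        rw [hsigned]; gcongr; exact abs_sub _ _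
    _ ≤ 2 * |(T m a j x : ℝ) - x / (2 * m)| := by
        rw [abs_mul, abs_two]; linarith [abs_card_filter_mod_sub_div_le ha x]

lemma abs_im_mul_norm_le (z P : ℂ) :
    |P.im| * ‖z‖ ≤ (|P.im| + |P.re|) * |z.re| + |(z * P).re| := by
  have him : z.im * P.im = z.re * P.re - (z * P).re := by rw [Complex.mul_re]; ring
  calc |P.im| * ‖z‖ ≤ |P.im| * (|z.re| + |z.im|) := by
        gcongr; exact Complex.norm_le_abs_re_add_abs_im z
    _ = |P.im| * |z.re| + |z.re * P.re - (z * P).re| := by rw [← him, abs_mul]; ring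
    _ ≤ |P.im| * |z.re| + (|z.re * P.re| + |(z * P).re|) := by gcongr; exact abs_sub _ _
    _ = (|P.im| + |P.re|) * |z.re| + |(z * P).re| := by rw [abs_mul]; ring

/- For non-real `P`, the consecutive terms `A * P ^ k` and `A * P ^ (k + 1)` cannot both be close to
the imaginary axis. -/
lemma exists_frequently_mul_norm_pow_le_abs_re {A : ℂ} (hA : A.re ≠ 0) (P : ℂ) :
    ∃ c : ℝ, 0 < c ∧ ∃ᶠ k : ℕ in atTop, c * ‖P‖ ^ k ≤ |(A * P ^ k).re| := by
  by_cases hP : P.im = 0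
  · refine ⟨|A.re|, abs_pos.2 hA, .of_forall fun k => ?_⟩
    obtain ⟨x, rfl⟩ : ∃ x : ℝ, (x : ℂ) = P := ⟨P.re, Complex.ext rfl (by simp [hP])⟩
    simp [← Complex.ofReal_pow, abs_mul]
  have hA' : 0 < ‖A‖ := norm_pos_iff.2 fun h => hA (by simp [h])
  have hPim : 0 < |P.im| := abs_pos.2 hP
  set M := |P.im| + |P.re| + ‖P‖ with hM
  have hM' : 0 < M := by positivity
  refine ⟨‖A‖ * |P.im| / M, div_pos (mul_pos hA' hPim) hM', frequently_atTop.2 fun K => ?_⟩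
  by_contra! hsmall
  have hK := hsmall K le_rfl
  have hK1 := hsmall (K + 1) K.le_succ
  rw [pow_succ, pow_succ, ← mul_assoc A] at hK1
  set z := A * P ^ K with hz
  have hnorm : ‖z‖ = ‖A‖ * ‖P‖ ^ K := by rw [hz, norm_mul, norm_pow]
  have hlt : (|P.im| + |P.re|) * |z.re| + |(z * P).re| < |P.im| * ‖z‖ := by
    calc _ < (|P.im| + |P.re|) * (‖A‖ * |P.im| / M * ‖P‖ ^ K) +
          ‖A‖ * |P.im| / M * (‖P‖ ^ K * ‖P‖) := by gcongr
      _ = M * (‖A‖ * |P.im| / M * ‖P‖ ^ K) := by rw [hM]; ring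
      _ = |P.im| * ‖z‖ := by rw [hnorm]; field_simp
  exact hlt.not_ge (abs_im_mul_norm_le z P)

section Period

variable {R : Type*} [CommRing R] (ψ : AddChar R ℂ) (g : R)

/-- The Gaussian period `∑ ψ (b * h)` over the powers `h` of `g`, each taken once (an empty sum if
`g` has infinite order). -/
noncomputable def gaussPeriod (b : R) : ℂ :=
  ∑ i ∈ range (orderOf g), ψ (b * g ^ i)

/-- The multiplicative analogue `∏ (1 - ψ (b * h))` of the Gaussian period, over the powers `h`
of `g`. -/
noncomputable def periodProd (b : R) : ℂ :=
  ∏ i ∈ range (orderOf g), (1 - ψ (b * g ^ i))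

lemma periodProd_mul_self (b : R) : periodProd ψ g (b * g) = periodProd ψ g b := by
  have hpow := pow_orderOf_eq_one g
  simp only [periodProd, mul_assoc, ← pow_succ']
  generalize orderOf g = n at hpow ⊢
  cases n with
  | zero => rfl
  | succ n =>
    rw [prod_range_succ, prod_range_succ' (fun i => 1 - ψ (b * g ^ i)), hpow, pow_zero]

lemma periodProd_self_pow (i : ℕ) : periodProd ψ g (g ^ i) = periodProd ψ g 1 := by
  induction i with
  | zero => rw [pow_zero]
  | succ i ih => rw [pow_succ, periodProd_mul_self, ih]

lemma prod_range_orderOf_mul (b : R) (k : ℕ) :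
    ∏ i ∈ range (orderOf g * k), (1 - ψ (b * g ^ i)) = periodProd ψ g b ^ k := by
  simp [prod_range_eq_prod_blocks, pow_add, pow_mul, pow_orderOf_eq_one, periodProd]

variable {g} in
lemma periodProd_zero (hg : orderOf g ≠ 0) : periodProd ψ g 0 = 0 :=
  prod_eq_zero (mem_range.2 hg.pos) (by simp)

lemma periodProd_neg [Finite R] (b : R) : periodProd ψ g (-b) = conj (periodProd ψ g b) := by
  simp [periodProd, AddChar.map_neg_eq_conj]

end Period

lemma injOn_pow_range_orderOf {M : Type*} [Monoid M] {g : M} :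
    Set.InjOn (g ^ ·) (range (orderOf g)) := by
  rw [coe_range]; exact pow_injOn_Iio_orderOf

lemma injOn_neg_pow_range_orderOf {R : Type*} [Ring R] {g : R} :
    Set.InjOn (-g ^ ·) (range (orderOf g)) :=
  neg_injective.comp_injOn injOn_pow_range_orderOf

/-- A semiprimitive root of a finite field `F` with `q` elements: an element of order `(q - 1) / 2`
which does not have `-1` among its powers. -/
structure IsSemiprimitiveRoot {F : Type*} [Field F] [Fintype F] (g : F) : Prop where
  orderOf_eq : orderOf g = (Fintype.card F - 1) / 2
  pow_ne_neg_one (i : ℕ) : g ^ i ≠ -1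

namespace IsSemiprimitiveRoot

variable {F : Type*} [Field F] [Fintype F] {g : F}

lemma card_eq (hg : IsSemiprimitiveRoot g) : Fintype.card F = 2 * orderOf g + 1 := by
  have hchar : ringChar F ≠ 2 := fun h =>
    hg.pow_ne_neg_one 0 (by rw [pow_zero, neg_one_eq_one_iff.2 h])
  have := FiniteField.odd_card_of_char_ne_two hchar
  have := hg.orderOf_eq
  omega

lemma orderOf_ne_zero (hg : IsSemiprimitiveRoot g) : orderOf g ≠ 0 := by
  have := hg.card_eq
  have := Fintype.one_lt_card (α := F)
  omega

variable [DecidableEq F]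

lemma disjoint_image_pow_image_neg_pow (hg : IsSemiprimitiveRoot g) :
    Disjoint ((range (orderOf g)).image (g ^ ·)) ((range (orderOf g)).image (-g ^ ·)) := by
  simp only [disjoint_left, mem_image, mem_range]
  rintro _ ⟨i, -, rfl⟩ ⟨j, hj, hij⟩
  refine hg.pow_ne_neg_one (i + (orderOf g - j)) ?_
  rw [pow_add, ← hij, neg_mul, ← pow_add, Nat.add_sub_cancel' hj.le, pow_orderOf_eq_one]

lemma image_pow_union_image_neg_pow (hg : IsSemiprimitiveRoot g) :
    (range (orderOf g)).image (g ^ ·) ∪ (range (orderOf g)).image (-g ^ ·) = {0}ᶜ := by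
  have hg0 : g ≠ 0 := (orderOf_ne_zero_iff.1 hg.orderOf_ne_zero).isUnit.ne_zero
  refine eq_of_subset_of_card_le ?_ ?_
  · simp [hg0]
  · rw [card_union_of_disjoint hg.disjoint_image_pow_image_neg_pow,
      card_image_of_injOn injOn_pow_range_orderOf, card_image_of_injOn injOn_neg_pow_range_orderOf,
      card_range, card_compl, card_singleton, hg.card_eq]
    omega

lemma sum_compl_zero_eq_of_conj (hg : IsSemiprimitiveRoot g) {f : F → ℂ}
    (hf : ∀ l, f (-l) = conj (f l)) :
    ∑ l ∈ {0}ᶜ, f l = (2 * (∑ i ∈ range (orderOf g), f (g ^ i)).re : ℝ) := by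
  rw [← hg.image_pow_union_image_neg_pow, sum_union hg.disjoint_image_pow_image_neg_pow,
    sum_image injOn_pow_range_orderOf, sum_image injOn_neg_pow_range_orderOf, ← Complex.add_conj,
    map_sum]
  simp only [hf]

lemma prod_compl_zero_eq_of_conj (hg : IsSemiprimitiveRoot g) {f : F → ℂ}
    (hf : ∀ l, f (-l) = conj (f l)) :
    ∏ l ∈ {0}ᶜ, f l = (‖∏ i ∈ range (orderOf g), f (g ^ i)‖ ^ 2 : ℝ) := by
  rw [← hg.image_pow_union_image_neg_pow, prod_union hg.disjoint_image_pow_image_neg_pow,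
    prod_image injOn_pow_range_orderOf, prod_image injOn_neg_pow_range_orderOf,
    Complex.ofReal_pow, ← Complex.mul_conj', map_prod]
  simp only [hf]

end IsSemiprimitiveRoot

section Gauss

variable {F : Type*} [Field F] [Fintype F]

lemma two_mul_re_gaussPeriod [DecidableEq F] {g : F} (hg : IsSemiprimitiveRoot g) {ψ : AddChar F ℂ}
    (hψ : ψ.IsPrimitive) (b : F) :
    2 * (gaussPeriod ψ g b).re = if b = 0 then (Fintype.card F - 1 : ℝ) else -1 := by
  have hsum : ψ 0 + ∑ l ∈ {0}ᶜ, ψ (b * l) = if b = 0 then (Fintype.card F : ℂ) else 0 := by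
    have := AddChar.sum_mulShift b hψ
    rw [Fintype.sum_eq_add_sum_compl 0, zero_mul] at this
    simpa only [mul_comm b, Nat.cast_ite, Nat.cast_zero] using this
  rw [hg.sum_compl_zero_eq_of_conj (f := fun l => ψ (b * l))
    (fun l => by rw [mul_neg, AddChar.map_neg_eq_conj]), AddChar.map_zero_eq_one] at hsum
  apply Complex.ofReal_injective
  rw [gaussPeriod, eq_sub_of_add_eq' hsum]
  split_ifs <;> simp

lemma re_gaussPeriod_ne_zero {g : F} (hg : IsSemiprimitiveRoot g) {ψ : AddChar F ℂ}
    (hψ : ψ.IsPrimitive) (b : F) : (gaussPeriod ψ g b).re ≠ 0 := by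
  classical
  have hcard : (1 : ℝ) < Fintype.card F := by exact_mod_cast Fintype.one_lt_card
  have h := two_mul_re_gaussPeriod hg hψ b
  intro h0
  rw [h0] at h
  split_ifs at h <;> linarith

end Gauss

lemma isPrimitiveRoot_stdAddChar_one (n : ℕ) [NeZero n] :
    IsPrimitiveRoot (ZMod.stdAddChar (1 : ZMod n) : ℂ) n := by
  have h := ZMod.stdAddChar_coe (N := n) 1
  rw [Int.cast_one, Int.cast_one, mul_one] at h
  exact h ▸ Complex.isPrimitiveRoot_exp n (NeZero.ne n)

lemma prod_one_sub_stdAddChar (n : ℕ) [NeZero n] :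
    ∏ l ∈ ({0}ᶜ : Finset (ZMod n)), (1 - ZMod.stdAddChar l : ℂ) = n := by
  obtain ⟨n, rfl⟩ := Nat.exists_eq_succ_of_ne_zero (NeZero.ne n)
  have hval {k : ℕ} (hk : k < n) : ((k + 1 : ℕ) : ZMod (n + 1)).val = k + 1 :=
    ZMod.val_natCast_of_lt (by omega)
  have hpos {l : ZMod (n + 1)} (hl : l ≠ 0) : 0 < l.val := (ZMod.val_ne_zero l).2 hl |>.pos
  rw [Nat.cast_succ, ← (isPrimitiveRoot_stdAddChar_one (n + 1)).prod_one_sub_pow_eq_order]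
  symm
  refine prod_nbij' (fun k => ((k + 1 : ℕ) : ZMod (n + 1))) (fun l => l.val - 1) ?_ ?_ ?_ ?_ ?_
  · intro k hk
    rw [mem_compl, mem_singleton, ← ZMod.val_eq_zero, hval (mem_range.1 hk)]
    exact k.succ_ne_zero
  · intro l hl
    have := hpos (by simpa using hl)
    have := l.val_lt
    simp only [mem_range]
    omega
  · intro k hk
    rw [hval (mem_range.1 hk), Nat.add_sub_cancel]
  · intro l hl
    rw [Nat.sub_add_cancel (hpos (by simpa using hl)), ZMod.natCast_zmod_val]
  · intro k _
    rw [← AddChar.map_nsmul_eq_pow, nsmul_one]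

section Fourier

variable {m : ℕ} [NeZero m]

lemma natCast_mul_signedCount (a : ZMod m) (x : ℕ) :
    (m * signedCount m a x : ℂ) = ∑ l : ZMod m, ZMod.stdAddChar (-a * l) *
      ∑ n ∈ range x, (-1) ^ s n * ZMod.stdAddChar l ^ n := by
  have horth (n : ℕ) : ∑ l : ZMod m, (ZMod.stdAddChar (-a * l) * ZMod.stdAddChar l ^ n : ℂ) =
      if (n : ZMod m) = a then (m : ℂ) else 0 := by
    have := AddChar.sum_mulShift ((n : ZMod m) - a) (ZMod.isPrimitive_stdAddChar m)
    simp only [sub_eq_zero, ZMod.card, Nat.cast_ite, Nat.cast_zero] at this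
    rw [← this]
    refine sum_congr rfl fun l _ => ?_
    rw [← AddChar.map_nsmul_eq_pow, ← AddChar.map_add_eq_mul, nsmul_eq_mul]
    congr 1
    ring
  simp only [mul_sum, mul_left_comm _ ((-1 : ℂ) ^ s _)]
  rw [sum_comm]
  simp only [← mul_sum, horth, signedCount, mul_ite, mul_zero, ← sum_filter]
  push_cast
  rw [mul_sum]
  exact sum_congr rfl fun n _ => mul_comm _ _

lemma sum_range_two_pow_stdAddChar (k : ℕ) (l : ZMod m) :
    ∑ n ∈ range (2 ^ (orderOf (2 : ZMod m) * k)), (-1) ^ s n * (ZMod.stdAddChar l : ℂ) ^ n =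
      periodProd ZMod.stdAddChar 2 l ^ k := by
  rw [sum_range_two_pow_neg_one_pow_s_mul_pow, ← prod_range_orderOf_mul]
  refine prod_congr rfl fun i _ => ?_
  rw [← AddChar.map_nsmul_eq_pow, nsmul_eq_mul, mul_comm, Nat.cast_pow, Nat.cast_ofNat]

end Fourier

section Semiprimitive

variable {p : ℕ} [Fact p.Prime]

lemma norm_periodProd_stdAddChar_one {g : ZMod p} (hg : IsSemiprimitiveRoot g) :
    ‖periodProd ZMod.stdAddChar g 1‖ = √p := by
  have hprod := hg.prod_compl_zero_eq_of_conj (f := fun l => 1 - ZMod.stdAddChar l)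
    fun l => by simp [AddChar.map_neg_eq_conj]
  rw [prod_one_sub_stdAddChar] at hprod
  rw [eq_comm, Real.sqrt_eq_iff_eq_sq p.cast_nonneg (norm_nonneg _)]
  simpa only [periodProd, one_mul] using mod_cast hprod

lemma mul_signedCount_two_pow (h2 : IsSemiprimitiveRoot (2 : ZMod p)) (a : ZMod p)
    {k : ℕ} (hk : k ≠ 0) :
    (p : ℝ) * signedCount p a (2 ^ (orderOf (2 : ZMod p) * k)) =
      2 * (gaussPeriod ZMod.stdAddChar 2 (-a) *
        periodProd ZMod.stdAddChar (2 : ZMod p) 1 ^ k).re := by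
  apply Complex.ofReal_injective
  have hconj (l : ZMod p) :
      ZMod.stdAddChar (-a * -l) * periodProd ZMod.stdAddChar 2 (-l) ^ k =
        conj (ZMod.stdAddChar (-a * l) * periodProd ZMod.stdAddChar 2 l ^ k) := by
    simp only [mul_neg, AddChar.map_neg_eq_conj, periodProd_neg, map_mul, map_pow]
  have hfourier := natCast_mul_signedCount a (2 ^ (orderOf (2 : ZMod p) * k))
  simp only [sum_range_two_pow_stdAddChar] at hfourier
  rw [Fintype.sum_eq_add_sum_compl 0, periodProd_zero _ h2.orderOf_ne_zero, zero_pow hk, mul_zero,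
    zero_add, h2.sum_compl_zero_eq_of_conj hconj] at hfourier
  simpa only [periodProd_self_pow, ← sum_mul, gaussPeriod, Complex.ofReal_mul,
    Complex.ofReal_natCast, Complex.ofReal_intCast] using hfourier

lemma exists_frequently_mul_sqrt_pow_le_abs_signedCount
    (h2 : IsSemiprimitiveRoot (2 : ZMod p)) (a : ZMod p) :
    ∃ c : ℝ, 0 < c ∧ ∃ᶠ k : ℕ in atTop,
      c * √p ^ k ≤ |(signedCount p a (2 ^ (orderOf (2 : ZMod p) * k)) : ℝ)| := by
  obtain ⟨c, hc, hfreq⟩ := exists_frequently_mul_norm_pow_le_abs_re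
    (re_gaussPeriod_ne_zero h2 (ZMod.isPrimitive_stdAddChar p) (-a))
    (periodProd ZMod.stdAddChar (2 : ZMod p) 1)
  have hp : (0 : ℝ) < p := by exact_mod_cast (Fact.out : p.Prime).pos
  refine ⟨2 * c / p, by positivity, (hfreq.and_eventually (eventually_ne_atTop 0)).mono ?_⟩
  rintro k ⟨hle, hk⟩
  rw [norm_periodProd_stdAddChar_one h2] at hle
  have habs := congrArg abs (mul_signedCount_two_pow h2 a hk)
  rw [abs_mul, abs_mul, abs_two, abs_of_pos hp] at habs
  rw [div_mul_eq_mul_div, div_le_iff₀' hp, habs, mul_assoc]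
  gcongr

end Semiprimitive

lemma pow_mul_rpow_log_div_log {b y : ℝ} (hb : 0 < b) (hb1 : b ≠ 1) (hy : 0 < y) {r : ℕ}
    (hr : r ≠ 0) (k : ℕ) :
    (b ^ (r * k)) ^ (Real.log y / (2 * r * Real.log b)) = √y ^ k := by
  have hlog : Real.log b ≠ 0 := Real.log_ne_zero_of_pos_of_ne_one hb hb1
  rw [← Real.exp_log (pow_pos hb _), ← Real.exp_log (pow_pos (Real.sqrt_pos.2 hy) k),
    ← Real.exp_mul, Real.log_pow, Real.log_pow, Real.log_sqrt hy.le]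
  congr 1
  push_cast
  field_simp

theorem gelfond_exponent_semiprimitive_root_lower_general
    {p : ℕ} [Fact p.Prime] (h2 : IsSemiprimitiveRoot (2 : ZMod p))
    {a : ℕ} (ha : a < p) {j : ℕ} (hj : j < 2) :
    ∃ c : ℝ, 0 < c ∧ ∃ᶠ x : ℕ in atTop,
      c * (x : ℝ) ^ (Real.log p / ((p - 1) * Real.log 2)) ≤
        |(T p a j x : ℝ) - x / (2 * p)| := by
  set r := orderOf (2 : ZMod p)
  have hr : r ≠ 0 := h2.orderOf_ne_zero
  have hp : (1 : ℝ) < p := by exact_mod_cast (Fact.out : p.Prime).one_lt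
  have hpr : (p : ℝ) - 1 = 2 * r := by
    rw [sub_eq_iff_eq_add]; exact_mod_cast (ZMod.card p).symm.trans h2.card_eq
  obtain ⟨c, hc, hfreq⟩ := exists_frequently_mul_sqrt_pow_le_abs_signedCount h2 a
  have htop : Tendsto (fun k => 2 ^ (r * k)) atTop (atTop : Filter ℕ) :=
    (tendsto_pow_atTop_atTop_of_one_lt one_lt_two).comp (tendsto_id.const_mul_atTop' hr.pos)
  have hsqrt : 1 < √(p : ℝ) := Real.lt_sqrt_of_sq_lt (by simpa using hp)
  have hlarge : ∀ᶠ k : ℕ in atTop, 2 / c ≤ √p ^ k :=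
    (tendsto_pow_atTop_atTop_of_one_lt hsqrt).eventually_ge_atTop _
  refine ⟨c / 4, by positivity, htop.frequently ((hfreq.and_eventually hlarge).mono ?_)⟩
  rintro k ⟨hle, hk⟩
  have hpow : ((2 ^ (r * k) : ℕ) : ℝ) ^ (Real.log p / ((p - 1) * Real.log 2)) = √p ^ k := by
    rw [hpr, Nat.cast_pow, Nat.cast_ofNat]
    exact pow_mul_rpow_log_div_log two_pos (by norm_num) (by linarith) hr k
  have hdev := abs_signedCount_sub_one_le ha hj (2 ^ (r * k))
  rw [div_le_iff₀' hc] at hk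
  rw [hpow]
  linarith

/-- Lower-bound half of Theorem 3: if `p` is an odd prime for which `2` is a
semiprimitive root (order `(p-1)/2` and `2^x ≡ -1 (mod p)` unsolvable), then
`T_{p,a}^{(j)}(x) - x/(2p) = Ω(x^{α-ε})` for every `ε > 0`, where
`α = ln p / ((p-1) ln 2)`. -/
theorem gelfond_exponent_semiprimitive_root_lower
    (p : ℕ) (hp : p.Prime) (hodd : Odd p)
    (hord : orderOf (2 : ZMod p) = (p - 1) / 2)
    (hneg : ¬ ∃ x : ℕ, (2 : ZMod p) ^ x = -1)
    (a : ℕ) (ha : a < p) (j : ℕ) (hj : j < 2)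
    (ε : ℝ) (hε : 0 < ε) :
    ∃ c : ℝ, 0 < c ∧ ∀ X : ℕ, ∃ x : ℕ, X ≤ x ∧
      c * (x : ℝ) ^ (Real.log p / ((p - 1) * Real.log 2) - ε) ≤
        |(T p a j x : ℝ) - x / (2 * p)| := by
  have := Fact.mk hp
  have h2 : IsSemiprimitiveRoot (2 : ZMod p) := ⟨by rwa [ZMod.card], not_exists.1 hneg⟩
  obtain ⟨c, hc, hfreq⟩ := gelfond_exponent_semiprimitive_root_lower_general h2 ha hj
  refine ⟨c, hc, frequently_atTop.1 ((hfreq.and_eventually (eventually_ge_atTop 1)).mono ?_)⟩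
  rintro x ⟨hle, hx⟩
  refine le_trans ?_ hle
  gcongr
  · exact_mod_cast hx
  · exact sub_le_self _ hε.le
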